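/- Let φ : ℝ → ℝ be defined by φ(z) = (exp(z) − 1)/z for z ≠ 0 and φ(0) = 1. Let ρ > 0 be a real number and k a positive integer with k ≥ 2ρ. Then there exists a real polynomial p of degree at most k−1 such that for all z ∈ [−4ρ, 0], |φ(z) − p(z)| ≤ (8/(3k − 5ρ)) · ( e ρ / (k + 2ρ) )^k, where e is Euler's number. -/

import Mathlib

/-- The phi-function of exponential integrators: `φ(z) = (e^z - 1)/z`, `φ(0) = 1`. -/
noncomputable def phiFun (z : ℝ) : ℝ :=
  if z = 0 then 1 else (Real.exp z - 1) / z

open Polynomial in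
lemma aux_mono (k : ℕ) (hk : 0 < k) (r : ℝ) (hr : 1 < r) (n : ℕ) : ∀ d : ℤ,
    ∃ q : Polynomial ℝ, q.natDegree ≤ k - 1 ∧ ∀ x ∈ Set.Icc (-1 : ℝ) 1,
      |x ^ n * (Polynomial.Chebyshev.T ℝ d).eval x - q.eval x| ≤
        (r ^ k)⁻¹ * (r ^ d + r ^ (-d)) * ((r + r⁻¹) / 2) ^ n := by
  have hr0 : 0 < r := by linarith
  induction n with
  | zero =>
    intro d
    by_cases hd : d.natAbs ≤ k - 1
    · refine ⟨Chebyshev.T ℝ d, ?_, ?_⟩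
      · simpa using hd
      · intro x hx
        simp
        positivity
    · refine ⟨0, by simp, ?_⟩
      intro x hx
      have h1 : |(Chebyshev.T ℝ d).eval x| ≤ 1 :=
        Chebyshev.abs_eval_T_real_le_one d (abs_le.mpr hx)
      have h2 : r ^ k ≤ r ^ d + r ^ (-d) := by
        have hk' : k ≤ d.natAbs := by omega
        have h3 : r ^ (k:ℤ) ≤ r ^ (d.natAbs : ℤ) := zpow_le_zpow_right₀ hr.le (by exact_mod_cast hk')
        have h4 : 0 < r ^ d := by positivity
        have h5 : 0 < r ^ (-d) := by positivity
        rw [zpow_natCast] at h3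
        rcases Int.natAbs_eq d with h | h
        · rw [← h] at h3; linarith
        · have : (d.natAbs : ℤ) = -d := by omega
          rw [this] at h3; linarith
      have h3 : 1 ≤ (r ^ k)⁻¹ * (r ^ d + r ^ (-d)) := by
        rw [inv_mul_eq_div, le_div_iff₀ (by positivity)]; linarith
      simp only [pow_zero, one_mul, eval_zero, sub_zero, mul_one]
      linarith
  | succ n ih =>
    intro d
    obtain ⟨q1, hq1, h1⟩ := ih (d + 1)
    obtain ⟨q2, hq2, h2⟩ := ih (d - 1)
    refine ⟨C (1/2) * (q1 + q2), ?_, ?_⟩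
    · refine (natDegree_C_mul_le _ _).trans ((natDegree_add_le _ _).trans (max_le hq1 hq2))
    · intro x hx
      have e1 := h1 x hx
      have e2 := h2 x hx
      have hT : x * (Chebyshev.T ℝ d).eval x =
          ((Chebyshev.T ℝ (d+1)).eval x + (Chebyshev.T ℝ (d-1)).eval x) / 2 := by
        have := congrArg (Polynomial.eval x) (Chebyshev.T_add_one ℝ d)
        simp at this
        linarith
      have key : x ^ (n+1) * (Chebyshev.T ℝ d).eval x - (C (1/2) * (q1 + q2)).eval x
          = ((x ^ n * (Chebyshev.T ℝ (d+1)).eval x - q1.eval x)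
            + (x ^ n * (Chebyshev.T ℝ (d-1)).eval x - q2.eval x)) / 2 := by
        rw [pow_succ, mul_assoc, hT]; simp; ring
      have hR : (r ^ k)⁻¹ * (r ^ d + r ^ (-d)) * ((r + r⁻¹) / 2) ^ (n+1)
          = ((r ^ k)⁻¹ * (r ^ (d+1) + r ^ (-(d+1))) * ((r + r⁻¹) / 2) ^ n
            + (r ^ k)⁻¹ * (r ^ (d-1) + r ^ (-(d-1))) * ((r + r⁻¹) / 2) ^ n) / 2 := by
        have a1 : r ^ (d+1) = r ^ d * r := zpow_add_one₀ hr0.ne' d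
        have a2 : r ^ (d-1) = r ^ d * r⁻¹ := zpow_sub_one₀ hr0.ne' d
        have a3 : r ^ (-(d+1)) = r ^ (-d) * r⁻¹ := by
          rw [← zpow_sub_one₀ hr0.ne']; congr 1; ring
        have a4 : r ^ (-(d-1)) = r ^ (-d) * r := by
          rw [← zpow_add_one₀ hr0.ne']; congr 1; ring
        rw [a1, a2, a3, a4, pow_succ]; ring
      rw [key, hR, abs_div, abs_two]
      gcongr
      exact (abs_add_le _ _).trans (add_le_add e1 e2)

lemma aux_sum (k : ℕ) (hk : 0 < k) (r : ℝ) (hr : 1 < r) (c : ℕ → ℝ) (hc : ∀ n, 0 ≤ c n)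
    (N : ℕ) : ∃ q : Polynomial ℝ, q.natDegree ≤ k - 1 ∧ ∀ x ∈ Set.Icc (-1 : ℝ) 1,
      |∑ n ∈ Finset.range N, c n * x ^ n - q.eval x| ≤
        2 * (r ^ k)⁻¹ * ∑ n ∈ Finset.range N, c n * ((r + r⁻¹) / 2) ^ n := by
  choose q hq h using fun n => aux_mono k hk r hr n 0
  refine ⟨∑ n ∈ Finset.range N, Polynomial.C (c n) * q n, ?_, ?_⟩
  · exact Polynomial.natDegree_sum_le_of_forall_le _ _
      fun n _ => (Polynomial.natDegree_C_mul_le _ _).trans (hq n)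
  · intro x hx
    rw [Polynomial.eval_finsetSum, ← Finset.sum_sub_distrib, Finset.mul_sum]
    refine (Finset.abs_sum_le_sum_abs _ _).trans (Finset.sum_le_sum fun n _ => ?_)
    have := h n x hx
    simp only [Polynomial.Chebyshev.T_zero, Polynomial.eval_one, mul_one, neg_zero, zpow_zero] at this
    rw [Polynomial.eval_mul, Polynomial.eval_C, ← mul_sub, abs_mul, abs_of_nonneg (hc n)]
    calc _ ≤ c n * _ := mul_le_mul_of_nonneg_left this (hc n)
      _ = _ := by ring

lemma phi_int (z : ℝ) : phiFun z = ∫ s in (0:ℝ)..1, Real.exp (s * z) := by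
  unfold phiFun
  split_ifs with h
  · simp [h]
  · rw [intervalIntegral.integral_comp_mul_right (fun t => Real.exp t) h]
    simp [integral_exp]; field_simp

noncomputable def cc (ρ : ℝ) (n : ℕ) : ℝ :=
  ∫ s in (0:ℝ)..1, Real.exp (-(2 * ρ * s)) * ((2 * ρ * s) ^ n / n.factorial)

lemma cc_nonneg (ρ : ℝ) (hρ : 0 < ρ) (n : ℕ) : 0 ≤ cc ρ n := by
  apply intervalIntegral.integral_nonneg (by norm_num)
  intro s hs
  have := hs.1
  positivity

lemma cc_sum (ρ x : ℝ) (N : ℕ) : ∑ n ∈ Finset.range N, cc ρ n * x ^ n =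
    ∫ s in (0:ℝ)..1, Real.exp (-(2 * ρ * s)) *
      ∑ n ∈ Finset.range N, (2 * ρ * s * x) ^ n / n.factorial := by
  simp_rw [Finset.mul_sum]
  rw [intervalIntegral.integral_finsetSum]
  · refine Finset.sum_congr rfl fun n _ => ?_
    rw [cc, ← intervalIntegral.integral_mul_const]
    congr 1; ext s; rw [mul_pow (2 * ρ * s)]; ring
  · intro n _
    apply Continuous.intervalIntegrable
    fun_prop

lemma cc_le (ρ : ℝ) (hρ : 0 < ρ) (y : ℝ) (hy : 0 ≤ y) (N : ℕ) :
    ∑ n ∈ Finset.range N, cc ρ n * y ^ n ≤ phiFun (2 * ρ * (y - 1)) := by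
  rw [cc_sum, phi_int]
  apply intervalIntegral.integral_mono_on (by norm_num)
  · apply Continuous.intervalIntegrable; fun_prop
  · apply Continuous.intervalIntegrable; fun_prop
  · intro s hs
    have h0 := hs.1
    have : Real.exp (s * (2 * ρ * (y - 1))) = Real.exp (-(2 * ρ * s)) * Real.exp (2 * ρ * s * y) := by
      rw [← Real.exp_add]; congr 1; ring
    rw [this]
    gcongr
    exact Real.sum_le_exp_of_nonneg (by positivity) N

lemma cc_tail (ρ : ℝ) (hρ : 0 < ρ) (x : ℝ) (hx : x ∈ Set.Icc (-1:ℝ) 1) (N : ℕ) (hN : 4 * ρ ≤ N) :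
    |phiFun (2 * ρ * (x - 1)) - ∑ n ∈ Finset.range N, cc ρ n * x ^ n| ≤
      (2 * ρ) ^ N / N.factorial * 2 := by
  rw [cc_sum, phi_int, ← intervalIntegral.integral_sub]
  rotate_left
  · apply Continuous.intervalIntegrable; fun_prop
  · apply Continuous.intervalIntegrable; fun_prop
  have := intervalIntegral.norm_integral_le_of_norm_le_const (a := 0) (b := 1)
    (f := fun s => Real.exp (s * (2 * ρ * (x - 1))) - Real.exp (-(2 * ρ * s)) *
      ∑ n ∈ Finset.range N, (2 * ρ * s * x) ^ n / n.factorial)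
    (C := (2 * ρ) ^ N / N.factorial * 2) ?_
  · simpa using this
  intro s hs
  rw [Set.uIoc_of_le (by norm_num)] at hs
  have h0 := hs.1
  have h1 := hs.2
  have e : Real.exp (s * (2 * ρ * (x - 1))) = Real.exp (-(2 * ρ * s)) * Real.exp (2 * ρ * s * x) := by
    rw [← Real.exp_add]; congr 1; ring
  rw [e, ← mul_sub, norm_mul]
  have b1 : ‖Real.exp (-(2 * ρ * s))‖ ≤ 1 := by
    rw [Real.norm_eq_abs, abs_of_pos (Real.exp_pos _), Real.exp_le_one_iff]
    have : 0 < 2 * ρ * s := by positivity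
    linarith
  have hb : |2 * ρ * s * x| ≤ 2 * ρ := by
    rw [abs_mul, abs_of_pos (by positivity)]
    have := abs_le.mpr hx
    calc 2 * ρ * s * |x| ≤ 2 * ρ * 1 * 1 := by gcongr
      _ = _ := by ring
  have b2 : ‖Real.exp (2 * ρ * s * x) - ∑ n ∈ Finset.range N, (2 * ρ * s * x) ^ n / n.factorial‖
      ≤ (2 * ρ) ^ N / N.factorial * 2 := by
    have h := Complex.exp_bound' (x := ((2 * ρ * s * x : ℝ) : ℂ)) (n := N) (by
      rw [Complex.norm_real, Real.norm_eq_abs, div_le_iff₀ (by positivity)]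
      push_cast
      linarith)
    have h' : ‖Real.exp (2 * ρ * s * x) - ∑ n ∈ Finset.range N, (2 * ρ * s * x) ^ n / n.factorial‖
      ≤ |2 * ρ * s * x| ^ N / N.factorial * 2 := by
      rw [Complex.norm_real, Real.norm_eq_abs] at h
      rw [← Complex.norm_real]
      push_cast at h ⊢
      exact h
    refine h'.trans ?_
    gcongr
  calc _ ≤ 1 * _ := mul_le_mul b1 b2 (norm_nonneg _) (by norm_num)
    _ = _ := one_mul _

lemma num_ineq (ρ : ℝ) (hρ : 0 < ρ) (k : ℕ) (hk : 0 < k) (h2 : 2 * ρ ≤ (k : ℝ)) :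
    2 * (((k:ℝ) / ρ) ^ k)⁻¹ * phiFun (2 * ρ * (((k:ℝ) / ρ + ((k:ℝ) / ρ)⁻¹) / 2 - 1)) <
     (8 / (3 * (k : ℝ) - 5 * ρ)) * (Real.exp 1 * ρ / ((k : ℝ) + 2 * ρ)) ^ k := by
  have hk0 : (0:ℝ) < k := by exact_mod_cast hk
  obtain ⟨u, hu⟩ : ∃ u, u = ρ / k := ⟨_, rfl⟩
  have hu0 : 0 < u := by rw [hu]; positivity
  have hρu : ρ = k * u := by rw [hu]; field_simp
  have hu1 : u ≤ 1 / 2 := by rw [hu, div_le_iff₀ hk0]; linarith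
  have hz : 2 * ρ * (((k:ℝ) / ρ + ((k:ℝ) / ρ)⁻¹) / 2 - 1) = k * (1 - 2 * u + u ^ 2) := by
    rw [hρu]; field_simp; ring
  have hw : 0 < 1 - 2 * u + u ^ 2 := by nlinarith
  have hζ : 0 < k * (1 - 2 * u + u ^ 2) := by positivity
  have hd : 0 < 3 * (k : ℝ) - 5 * ρ := by linarith
  rw [hz, phiFun, if_neg hζ.ne']
  have e1 : (((k:ℝ) / ρ) ^ k)⁻¹ = u ^ k := by rw [← inv_pow, inv_div, hu]
  have e2 : Real.exp 1 * ρ / ((k : ℝ) + 2 * ρ) = Real.exp 1 * u / (1 + 2 * u) := by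
    rw [hρu]; field_simp
  rw [e1, e2]
  have hexp : 1 + 2 * u ≤ Real.exp (2 * u - u ^ 2) := by
    have := Real.quadratic_le_exp_of_nonneg (x := 2 * u - u ^ 2) (by nlinarith)
    have h3 : 2 * u ^ 2 ≤ (2 * u - u ^ 2) ^ 2 := by
      have : 2 ≤ (2 - u) ^ 2 := by nlinarith
      nlinarith [sq_nonneg u]
    linarith
  have b : u * Real.exp (1 - 2 * u + u ^ 2) ≤ Real.exp 1 * u / (1 + 2 * u) := by
    rw [le_div_iff₀ (by positivity)]
    have : Real.exp 1 = Real.exp (1 - 2 * u + u ^ 2) * Real.exp (2 * u - u ^ 2) := by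
      rw [← Real.exp_add]; congr 1; ring
    rw [this]
    have := mul_le_mul_of_nonneg_left hexp (by positivity : 0 ≤ u * Real.exp (1 - 2 * u + u ^ 2))
    linarith
  have bk := pow_le_pow_left₀ (by positivity) b k
  rw [mul_pow, ← Real.exp_nat_mul] at bk
  have hc : 2 / (k * (1 - 2 * u + u ^ 2)) ≤ 8 / (3 * (k : ℝ) - 5 * ρ) := by
    rw [div_le_div_iff₀ hζ hd, hρu]
    nlinarith [mul_nonneg hk0.le (by nlinarith [sq_nonneg (u - 3/8)] : 0 ≤ 1/4 - 3/4 * u + u ^ 2)]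
  have huk : 0 < u ^ k := by positivity
  calc _ = 2 / (k * (1 - 2 * u + u ^ 2)) * (u ^ k * (Real.exp (k * (1 - 2 * u + u ^ 2)) - 1)) := by
        field_simp
    _ < 2 / (k * (1 - 2 * u + u ^ 2)) * (u ^ k * Real.exp (k * (1 - 2 * u + u ^ 2))) := by
        gcongr; linarith
    _ ≤ _ := by gcongr

/-- Second bound of Lemma A.1: for `k ≥ 2ρ` there is a polynomial of degree at most
`k - 1` approximating `φ` on `[-4ρ, 0]` with error at most
`(8/(3k - 5ρ)) (eρ/(k + 2ρ))^k`. -/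
theorem phi_poly_approx_second_bound (ρ : ℝ) (hρ : 0 < ρ) (k : ℕ) (hk : 0 < k)
    (h2 : 2 * ρ ≤ (k : ℝ)) :
    ∃ p : Polynomial ℝ, p.natDegree ≤ k - 1 ∧
      ∀ z ∈ Set.Icc (-(4 * ρ)) 0,
        |phiFun z - p.eval z| ≤ (8 / (3 * (k : ℝ) - 5 * ρ)) *
          (Real.exp 1 * ρ / ((k : ℝ) + 2 * ρ)) ^ k := by
  have hnum := num_ineq ρ hρ k hk h2
  have hr : 1 < (k:ℝ) / ρ := by rw [lt_div_iff₀ hρ]; linarith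
  generalize (8 / (3 * (k : ℝ) - 5 * ρ)) * (Real.exp 1 * ρ / ((k : ℝ) + 2 * ρ)) ^ k = B at *
  generalize (k:ℝ) / ρ = r at *
  have hr0 : 0 < r := by linarith
  have ht : Filter.Tendsto (fun N : ℕ => (2 * ρ) ^ N / N.factorial * 2)
      Filter.atTop (nhds 0) := by
    simpa using (FloorSemiring.tendsto_pow_div_factorial_atTop (2 * ρ)).mul_const (2:ℝ)
  obtain ⟨N, hN, hN4⟩ := ((ht.eventually_lt_const (sub_pos.mpr hnum)).and
    (tendsto_natCast_atTop_atTop.eventually_ge_atTop (4 * ρ))).exists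
  obtain ⟨q, hq, h⟩ := aux_sum k hk r hr (cc ρ) (cc_nonneg ρ hρ) N
  refine ⟨q.comp (Polynomial.C (1 / (2 * ρ)) * Polynomial.X + Polynomial.C 1), ?_, ?_⟩
  · refine Polynomial.natDegree_comp_le.trans ?_
    calc _ ≤ q.natDegree * 1 := Nat.mul_le_mul_left _ Polynomial.natDegree_linear_le
      _ ≤ _ := by omega
  · intro z hz
    obtain ⟨x, hx⟩ : ∃ x, x = 1 / (2 * ρ) * z + 1 := ⟨_, rfl⟩
    have hzx : z = 2 * ρ * (x - 1) := by rw [hx]; field_simp; ring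
    have hxm : x ∈ Set.Icc (-1 : ℝ) 1 := by
      rw [hzx] at hz
      constructor
      · have := hz.1; nlinarith
      · have := hz.2; nlinarith
    have t1 := cc_tail ρ hρ x hxm N hN4
    have t2 := h x hxm
    have t3 := cc_le ρ hρ ((r + r⁻¹) / 2) (by positivity) N
    have t4 := mul_le_mul_of_nonneg_left t3 (by positivity : 0 ≤ 2 * (r ^ k)⁻¹)
    have ev : (q.comp (Polynomial.C (1 / (2 * ρ)) * Polynomial.X + Polynomial.C 1)).eval z
        = q.eval x := by
      rw [Polynomial.eval_comp, hx]; simp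
    rw [ev, hzx]
    have := abs_sub_le (phiFun (2 * ρ * (x - 1))) (∑ n ∈ Finset.range N, cc ρ n * x ^ n) (q.eval x)
    linarith
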